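/- Let X be a nonempty finite set, let p : X → ℝ and ξ : X → ℝ be probability distributions on X with p(x) > 0 and ξ(x) > 0 for all x ∈ X, and let m > 0 be a real number. For q : X → ℝ with q(x) > 0 for all x, define the NCE loss L(q) = −∑_{x∈X} p(x)·log( q(x)/(q(x) + m·ξ(x)) ) − m·∑_{x∈X} ξ(x)·log( m·ξ(x)/(q(x) + m·ξ(x)) ). Then p itself is the unique global minimizer of L over all strictly positive q : X → ℝ; that is, L(p) ≤ L(q) for all positive q, with equality if and only if q = p. -/

import Mathlib

/-!
With `D_q = q / (q + m ξ)` the classifier induced by the model `q`, the NCE loss is the sum over `x`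
of the cross-entropies of `D_q x` relative to `D_p x`, with weights `p x + m ξ x`. Each of them is
the entropy of `D_p x` plus a binary Kullback–Leibler divergence, so it is minimal exactly when
`D_q x = D_p x`, and `q x` can be recovered from `D_q x` because the noise `m ξ x` is positive. The
minimization happens at each `x` separately, so the minimizer comes out normalized by itself.
-/

open InformationTheory

section BinaryCrossEntropy

variable {s t u v : ℝ}

/-- The cross-entropy of the Bernoulli distribution with parameter `t` relative to the one with
parameter `s`, in nats. It is the true one when `t = 0 → s = 0` and `t = 1 → s = 1`; otherwise the
cross-entropy is infinite, and `Real.log 0 = 0` makes this a junk value. -/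
noncomputable def binCrossEntropy (s t : ℝ) : ℝ :=
  -(s * Real.log t + (1 - s) * Real.log (1 - t))

lemma mul_klFun_div (huv : v = 0 → u = 0) :
    v * klFun (u / v) = u * Real.log u - u * Real.log v + (v - u) := by
  rcases eq_or_ne v 0 with hv | hv
  · simp [hv, huv hv]
  rcases eq_or_ne u 0 with rfl | hu
  · simp [klFun_zero]
  rw [klFun, Real.log_div hu hv]
  field_simp
  ring

lemma mul_klFun_div_nonneg (hu : 0 ≤ u) (hv : 0 ≤ v) : 0 ≤ v * klFun (u / v) :=
  mul_nonneg hv (klFun_nonneg (div_nonneg hu hv))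

lemma mul_klFun_div_eq_zero_iff (hu : 0 ≤ u) (hv : 0 ≤ v) (huv : v = 0 → u = 0) :
    v * klFun (u / v) = 0 ↔ v = u := by
  rcases eq_or_ne v 0 with h | h
  · simp [h, huv h]
  · rw [mul_eq_zero_iff_left h, klFun_eq_zero_iff (div_nonneg hu hv), div_eq_one_iff_eq h, eq_comm]

lemma binCrossEntropy_eq_self_add_klFun (h0 : t = 0 → s = 0) (h1 : t = 1 → s = 1) :
    binCrossEntropy s t =
      binCrossEntropy s s + (t * klFun (s / t) + (1 - t) * klFun ((1 - s) / (1 - t))) := by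
  rw [mul_klFun_div h0, mul_klFun_div fun h ↦ by linarith [h1 (by linarith)], binCrossEntropy,
    binCrossEntropy]
  ring

lemma binCrossEntropy_self_le (hs : s ∈ Set.Icc 0 1) (ht : t ∈ Set.Icc 0 1)
    (h0 : t = 0 → s = 0) (h1 : t = 1 → s = 1) :
    binCrossEntropy s s ≤ binCrossEntropy s t := by
  rw [binCrossEntropy_eq_self_add_klFun h0 h1]
  exact le_add_of_nonneg_right <| add_nonneg (mul_klFun_div_nonneg hs.1 ht.1)
    (mul_klFun_div_nonneg (sub_nonneg.2 hs.2) (sub_nonneg.2 ht.2))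

lemma binCrossEntropy_self_eq_iff (hs : s ∈ Set.Icc 0 1) (ht : t ∈ Set.Icc 0 1)
    (h0 : t = 0 → s = 0) (h1 : t = 1 → s = 1) :
    binCrossEntropy s s = binCrossEntropy s t ↔ t = s := by
  have hs' : 0 ≤ 1 - s := sub_nonneg.2 hs.2
  have ht' : 0 ≤ 1 - t := sub_nonneg.2 ht.2
  rw [binCrossEntropy_eq_self_add_klFun h0 h1, left_eq_add,
    add_eq_zero_iff_of_nonneg (mul_klFun_div_nonneg hs.1 ht.1) (mul_klFun_div_nonneg hs' ht'),
    mul_klFun_div_eq_zero_iff hs.1 ht.1 h0,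
    mul_klFun_div_eq_zero_iff hs' ht' fun h ↦ by linarith [h1 (by linarith)]]
  exact ⟨And.left, fun h ↦ ⟨h, by rw [h]⟩⟩

end BinaryCrossEntropy

section DivAdd

variable {a b c : ℝ}

lemma div_add_mem_Icc (ha : 0 ≤ a) (hb : 0 ≤ b) : a / (a + b) ∈ Set.Icc 0 1 :=
  ⟨by positivity, div_le_one_of_le₀ (by linarith) (by positivity)⟩

lemma div_add_ne_one (hb : b ≠ 0) : a / (a + b) ≠ 1 := fun h ↦ by
  have hab : a + b ≠ 0 := fun h0 ↦ by simp [h0] at h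
  exact hb (by linarith [(div_eq_one_iff_eq hab).1 h])

lemma div_add_eq_div_add_iff (hb : b ≠ 0) (hab : a + b ≠ 0) (hcb : c + b ≠ 0) :
    a / (a + b) = c / (c + b) ↔ a = c := by
  rw [div_eq_div_iff hab hcb]
  refine ⟨fun h ↦ mul_right_cancel₀ hb (by linarith), fun h ↦ by rw [h]⟩

end DivAdd

section NCE

variable {X : Type*} [Fintype X] {p ξ q : X → ℝ} {m : ℝ}

/-- The loss of the model `q` in noise-contrastive estimation, with data weights `p`, noise weights
`ξ` and `m` noise samples per data sample. With positive noise, the true loss is infinite if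
`q x = 0 < p x` for some `x`, where `Real.log 0 = 0` makes this a junk value. -/
noncomputable def nceLoss (m : ℝ) (p ξ q : X → ℝ) : ℝ :=
  -∑ x, p x * Real.log (q x / (q x + m * ξ x))
    - m * ∑ x, ξ x * Real.log (m * ξ x / (q x + m * ξ x))

lemma nceLoss_eq_sum_binCrossEntropy (hpξ : ∀ x, p x + m * ξ x ≠ 0)
    (hqξ : ∀ x, q x + m * ξ x ≠ 0) :
    nceLoss m p ξ q =
      ∑ x, (p x + m * ξ x) *
        binCrossEntropy (p x / (p x + m * ξ x)) (q x / (q x + m * ξ x)) := by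
  rw [nceLoss, Finset.mul_sum, ← Finset.sum_neg_distrib, ← Finset.sum_sub_distrib]
  refine Finset.sum_congr rfl fun x _ ↦ ?_
  have hp := hpξ x
  rw [binCrossEntropy, one_sub_div hp, one_sub_div (hqξ x), add_sub_cancel_left,
    add_sub_cancel_left]
  field_simp
  ring

theorem stmt_2_general (hp : ∀ x, 0 ≤ p x) (hξ : ∀ x, 0 < ξ x) (hm : 0 < m)
    (hq : ∀ x, 0 ≤ q x) (hpq : ∀ x, q x = 0 → p x = 0) :
    nceLoss m p ξ p ≤ nceLoss m p ξ q ∧ (nceLoss m p ξ p = nceLoss m p ξ q ↔ q = p) := by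
  have noise_pos x : 0 < m * ξ x := mul_pos hm (hξ x)
  have hpξ x : 0 < p x + m * ξ x := add_pos_of_nonneg_of_pos (hp x) (noise_pos x)
  have hqξ x : 0 < q x + m * ξ x := add_pos_of_nonneg_of_pos (hq x) (noise_pos x)
  have hDp x := div_add_mem_Icc (hp x) (noise_pos x).le
  have hDq x := div_add_mem_Icc (hq x) (noise_pos x).le
  have hD0 x (h : q x / (q x + m * ξ x) = 0) : p x / (p x + m * ξ x) = 0 := by
    rw [hpq x ((div_eq_zero_iff.1 h).resolve_right (hqξ x).ne'), zero_div]
  have hD1 x (h : q x / (q x + m * ξ x) = 1) : p x / (p x + m * ξ x) = 1 :=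
    absurd h (div_add_ne_one (noise_pos x).ne')
  have term_le x := mul_le_mul_of_nonneg_left
    (binCrossEntropy_self_le (hDp x) (hDq x) (hD0 x) (hD1 x)) (hpξ x).le
  rw [nceLoss_eq_sum_binCrossEntropy (fun x ↦ (hpξ x).ne') fun x ↦ (hpξ x).ne',
    nceLoss_eq_sum_binCrossEntropy (fun x ↦ (hpξ x).ne') fun x ↦ (hqξ x).ne']
  refine ⟨Finset.sum_le_sum fun x _ ↦ term_le x, ?_⟩
  rw [Finset.sum_eq_sum_iff_of_le fun x _ ↦ term_le x, funext_iff]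
  simp only [Finset.mem_univ, true_imp_iff]
  refine forall_congr' fun x ↦ ?_
  rw [mul_right_inj' (hpξ x).ne',
    binCrossEntropy_self_eq_iff (hDp x) (hDq x) (hD0 x) (hD1 x),
    div_add_eq_div_add_iff (noise_pos x).ne' (hqξ x).ne' (hpξ x).ne']

end NCE

/-- NCE consistency (Theorem 1, finite-space version): the NCE loss over a finite
space is uniquely minimized at the data distribution `p` itself. -/
theorem stmt_2 {X : Type*} [Fintype X] [Nonempty X]
    (p ξ : X → ℝ) (hp : ∀ x, 0 < p x) (hξ : ∀ x, 0 < ξ x)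
    (hp1 : ∑ x, p x = 1) (hξ1 : ∑ x, ξ x = 1)
    (m : ℝ) (hm : 0 < m)
    (L : (X → ℝ) → ℝ)
    (hL : ∀ q, L q =
      -∑ x, p x * Real.log (q x / (q x + m * ξ x))
      - m * ∑ x, ξ x * Real.log (m * ξ x / (q x + m * ξ x))) :
    ∀ q : X → ℝ, (∀ x, 0 < q x) →
      L p ≤ L q ∧ (L p = L q ↔ q = p) := by
  obtain rfl : L = nceLoss m p ξ := funext hL
  exact fun q hq ↦ stmt_2_general (fun x ↦ (hp x).le) hξ hm (fun x ↦ (hq x).le)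
    fun x h ↦ absurd h (hq x).ne'
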